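/- Let d ≥ 1, 0 < γ < d, a ≥ 0 and t ≠ 0. Let u₁, u₂, u₃ be Schwartz functions on ℝ^d and set v_j = U(−t) u_j, where U(τ)f = F^{−1}(e^{−4π² i τ |ξ|²} Ff). Then there exists a nonzero complex constant c, depending only on d, γ, the sign of t, and on whether a = 0 or a > 0 (but not on |t|, a, or the u_j), such that M_t U(−t) H_{a,γ}(u₁, u₂, u₃) = c |t|^{−γ} Ĥ_{a,γ,t}(M_t v₁, R M_t v₂, M_t v₃), where M_t w(x) = e^{i|x|²/(4t)} w(x) and R w(x) = w(−x). -/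

import Mathlib

open MeasureTheory Real FourierTransform RealInnerProductSpace
open scoped ENNReal

/-- Convolution of two complex functions on `ℝ^d`. -/
noncomputable def convC {d : ℕ} (f g : EuclideanSpace ℝ (Fin d) → ℂ) :
    EuclideanSpace ℝ (Fin d) → ℂ :=
  fun x => ∫ y, f y * g (x - y)

/-- Convolution of two real functions on `ℝ^d`. -/
noncomputable def convR {d : ℕ} (f g : EuclideanSpace ℝ (Fin d) → ℝ) :
    EuclideanSpace ℝ (Fin d) → ℝ :=
  fun x => ∫ y, f y * g (x - y)

/-- The Riesz kernel `|x|^{γ-d}` on `ℝ^d`. -/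
noncomputable def riesz (d : ℕ) (γ : ℝ) : EuclideanSpace ℝ (Fin d) → ℝ :=
  fun x => ‖x‖ ^ (γ - (d : ℝ))

/-- The kernel `S_{a,t}(ξ) = a|t| (4a²t² + |ξ|²)^{-(d+1)/2}`. -/
noncomputable def Skernel (d : ℕ) (a t : ℝ) : EuclideanSpace ℝ (Fin d) → ℝ :=
  fun ξ => a * |t| * (4 * a ^ 2 * t ^ 2 + ‖ξ‖ ^ 2) ^ (-(((d : ℝ) + 1) / 2))

/-- The multiplier in `Ĥ_{a,γ,t}`: `S_{a,t} ∗ |·|^{γ-d}` if `a > 0`, `|·|^{γ-d}` if `a = 0`. -/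
noncomputable def hartreeKernel (d : ℕ) (γ a t : ℝ) : EuclideanSpace ℝ (Fin d) → ℝ :=
  if a = 0 then riesz d γ else convR (Skernel d a t) (riesz d γ)

/-- The trilinear operator `Ĥ_{a,γ,t}(f,g,h) = [(S_{a,t} ∗ |·|^{γ-d}) (f ∗ ḡ)] ∗ h`. -/
noncomputable def hartreeTrilinear (d : ℕ) (γ a t : ℝ)
    (f g h : EuclideanSpace ℝ (Fin d) → ℂ) : EuclideanSpace ℝ (Fin d) → ℂ :=
  convC (fun x => (hartreeKernel d γ a t x : ℂ) *
    convC f (fun y => (starRingEnd ℂ) (g y)) x) h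

/-- The Hartree trilinear operator
`H_{a,γ}(f,g,h)(x) = ((e^{-a|·|} |·|^{-γ}) ∗ (f ḡ))(x) · h(x)` on `ℝ^d`. -/
noncomputable def hartreeOp (d : ℕ) (a γ : ℝ)
    (f g h : EuclideanSpace ℝ (Fin d) → ℂ) : EuclideanSpace ℝ (Fin d) → ℂ :=
  fun x =>
    (∫ y : EuclideanSpace ℝ (Fin d),
      ((Real.exp (-(a * ‖y‖)) * ‖y‖ ^ (-γ) : ℝ) : ℂ) *
        (f (x - y) * (starRingEnd ℂ) (g (x - y)))) * h x

/-- The free Schrödinger propagator `U(τ)f = 𝓕⁻¹(e^{-4π²iτ|ξ|²} 𝓕f)`,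
written as an explicit Fourier integral. -/
noncomputable def schrodingerProp (d : ℕ) (τ : ℝ) (f : EuclideanSpace ℝ (Fin d) → ℂ) :
    EuclideanSpace ℝ (Fin d) → ℂ :=
  fun x => ∫ ξ : EuclideanSpace ℝ (Fin d),
    Complex.exp (-(4 * (π : ℂ) ^ 2 * (τ : ℂ) * (‖ξ‖ : ℂ) ^ 2) * Complex.I) *
      𝓕 f ξ * Complex.exp (2 * (π : ℂ) * Complex.I * (⟪x, ξ⟫ : ℝ))

/-- The multiplication operator `M_t w(x) = e^{i|x|²/(4t)} w(x)`. -/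
noncomputable def Mt (d : ℕ) (t : ℝ) (w : EuclideanSpace ℝ (Fin d) → ℂ) :
    EuclideanSpace ℝ (Fin d) → ℂ :=
  fun x => Complex.exp (Complex.I * (‖x‖ : ℂ) ^ 2 / (4 * (t : ℂ))) * w x

/-!
Two properties of `M_t U(-t)` drive the proof. It is Galilean covariant: multiplying `f` by the
plane wave `e^{-2πi⟪y,η⟫}` translates `M_t U(-t) f` by `4πtη`. Together with unitarity this turns
`𝓕⁻¹(u v̄)`, evaluated at `η`, into the correlation of `M_t U(-t) u` and `M_t U(-t) v` at `4πtη`. On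
the other hand, `(K ∗ (u₁ū₂)) u₃` with `K = e^{-a|·|} |·|^{-γ}` is a superposition, with weights
`k 𝓕⁻¹(u₁ū₂)`, of plane waves times `u₃`, so `M_t U(-t)` maps it to the superposition of translates
of `M_t U(-t) u₃`, that is, to a convolution.

Here `k` is the Fourier transform of the singular kernel `e^{-a|y|} |y|^{-γ}`. Both factors are
superpositions of Gaussians, whence their transforms `S_{a,1/(4π)}` and `|·|^{γ-d}` up to positive
constants, and the transform of the product is the convolution of the transforms. The factor
`|t|^{-γ}` comes from the homogeneity of `k` under `η ↦ 4πtη`.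
-/

section ExponentialIntegrals

open Set Filter Topology

theorem integral_Ioi_of_hasDerivAt_of_tendsto_nhdsGT {E : Type*} [NormedAddCommGroup E]
    [NormedSpace ℝ E] [CompleteSpace E] {f f' : ℝ → E} {a : ℝ} {l m : E}
    (hderiv : ∀ x ∈ Ioi a, HasDerivAt f (f' x) x) (f'int : IntegrableOn f' (Ioi a))
    (hl : Tendsto f (𝓝[>] a) (𝓝 l)) (hm : Tendsto f atTop (𝓝 m)) :
    ∫ x in Ioi a, f' x = m - l := by
  have hupdate {x : ℝ} (hx : a < x) : Function.update f a l =ᶠ[𝓝 x] f := by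
    filter_upwards [eventually_ne_nhds hx.ne'] with y hy using Function.update_of_ne hy ..
  rw [integral_Ioi_of_hasDerivAt_of_tendsto (f := Function.update f a l) (m := m) ?_
    (fun x hx => (hderiv x hx).congr_of_eventuallyEq (hupdate hx)) f'int
    (hm.congr' ?_), Function.update_self]
  · rwa [continuousWithinAt_update_same, Ici_sdiff_left]
  · filter_upwards [eventually_ne_atTop a] with y hy using (Function.update_of_ne hy ..).symm

theorem integrableOn_rpow_mul_exp_neg_div {b c : ℝ} (hb : 0 < b) (hc : 0 < c) :
    IntegrableOn (fun s : ℝ => s ^ (-b - 1) * exp (-(c / s))) (Ioi 0) := by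
  have h : IntegrableOn (fun r : ℝ => r ^ (b - 1) * exp (-c * r ^ (1 : ℝ))) (Ioi 0) :=
    integrableOn_rpow_mul_exp_neg_mul_rpow (by linarith) one_pos hc
  refine ((integrableOn_Ioi_comp_rpow_iff _ (by norm_num : (-1 : ℝ) ≠ 0)).2 h).congr_fun
    (fun s hs => ?_) measurableSet_Ioi
  have hs : 0 < s := hs
  simp only [smul_eq_mul, abs_neg, abs_one, one_mul, rpow_one]
  rw [← rpow_mul hs.le, ← mul_assoc, ← rpow_add hs, rpow_neg_one, neg_mul, ← div_eq_mul_inv]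
  ring_nf

theorem integral_rpow_mul_exp_neg_div {b c : ℝ} (hb : 0 < b) (hc : 0 < c) :
    ∫ s in Ioi (0 : ℝ), s ^ (-b - 1) * exp (-(c / s)) = (1 / c) ^ b * Gamma b := by
  rw [← integral_rpow_mul_exp_neg_mul_Ioi hb hc,
    ← integral_comp_rpow_Ioi _ (by norm_num : (-1 : ℝ) ≠ 0)]
  refine setIntegral_congr_fun measurableSet_Ioi fun s hs => ?_
  have hs : 0 < s := hs
  simp only [smul_eq_mul, abs_neg, abs_one, one_mul]
  rw [← rpow_mul hs.le, ← mul_assoc, ← rpow_add hs, rpow_neg_one, div_inv_eq_mul]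
  ring_nf

theorem tendsto_intervalIntegral_gaussian_atTop :
    Tendsto (fun x : ℝ => ∫ t in (0 : ℝ)..x, exp (-t ^ 2)) atTop (𝓝 (√π / 2)) := by
  have hint : IntegrableOn (fun t : ℝ => exp (-t ^ 2)) (Ioi 0) := by
    simpa using (integrable_exp_neg_mul_sq one_pos).integrableOn
  have hval : ∫ t in Ioi (0 : ℝ), exp (-t ^ 2) = √π / 2 := by simpa using integral_gaussian_Ioi 1
  exact hval ▸ intervalIntegral_tendsto_integral_Ioi 0 hint tendsto_id

theorem tendsto_intervalIntegral_gaussian_atBot :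
    Tendsto (fun x : ℝ => ∫ t in (0 : ℝ)..x, exp (-t ^ 2)) atBot (𝓝 (-(√π / 2))) := by
  refine (tendsto_intervalIntegral_gaussian_atTop.comp tendsto_neg_atBot_atTop).neg.congr
    fun x => ?_
  have := intervalIntegral.integral_comp_neg (a := 0) (b := -x) fun t : ℝ => exp (-t ^ 2)
  simp only [neg_sq, neg_neg, neg_zero] at this
  rw [Function.comp_apply, this, intervalIntegral.integral_symm, neg_neg]

/-- The function `e^{2pr} ∫₀^{p/√s + r√s} e^{-x²} dx` of `s`. Its sum over `r = ±q` is a primitive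
of the integrand in the subordination formula, up to the factor `-p`. -/
noncomputable def subordinationPrimitive (p r s : ℝ) : ℝ :=
  exp (2 * p * r) * ∫ x in (0 : ℝ)..(p / √s + r * √s), exp (-x ^ 2)

theorem hasDerivAt_subordinationPrimitive (p r : ℝ) {s : ℝ} (hs : 0 < s) :
    HasDerivAt (subordinationPrimitive p r)
      ((-(p / s) + r) / (2 * √s) * exp (-(p ^ 2 / s) - r ^ 2 * s)) s := by
  have hpos : 0 < √s := sqrt_pos.2 hs
  have hsq : √s ^ 2 = s := sq_sqrt hs.le
  have hsqrt := hasDerivAt_sqrt hs.ne'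
  have hprimitive (x : ℝ) :
      HasDerivAt (fun x => ∫ t in (0 : ℝ)..x, exp (-t ^ 2)) (exp (-x ^ 2)) x :=
    (by fun_prop : Continuous fun t : ℝ => exp (-t ^ 2)).integral_hasStrictDerivAt 0 x
      |>.hasDerivAt
  have hinner : HasDerivAt (fun s => p / √s + r * √s) ((-(p / s) + r) / (2 * √s)) s := by
    refine (((hasDerivAt_const s p).fun_div hsqrt hpos.ne').fun_add
      (hsqrt.const_mul r)).congr_deriv ?_
    rw [hsq]
    field_simp
    ring
  have hexp : -(p ^ 2 / s) - r ^ 2 * s = 2 * p * r + -(p / √s + r * √s) ^ 2 := by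
    nth_rewrite 1 2 [← hsq]
    field_simp
    ring
  refine (((hprimitive _).comp s hinner).const_mul _).congr_deriv ?_
  rw [hexp, exp_add]
  ring

theorem tendsto_subordinationPrimitive_nhdsGT_zero {p : ℝ} (hp : 0 < p) (r : ℝ) :
    Tendsto (subordinationPrimitive p r) (𝓝[>] 0) (𝓝 (exp (2 * p * r) * (√π / 2))) := by
  have hsqrt : Tendsto (fun s => √s) (𝓝[>] 0) (𝓝[>] 0) := by
    refine tendsto_nhdsWithin_iff.2 ⟨?_, ?_⟩
    · simpa using (continuous_sqrt.tendsto 0).mono_left nhdsWithin_le_nhds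
    · filter_upwards [self_mem_nhdsWithin] with s hs using sqrt_pos.2 hs
  have hinv : Tendsto (fun s => p / √s) (𝓝[>] 0) atTop := by
    simpa only [div_eq_mul_inv, Pi.inv_apply] using hsqrt.inv_tendsto_nhdsGT_zero.const_mul_atTop hp
  refine (tendsto_intervalIntegral_gaussian_atTop.comp ?_).const_mul _
  exact hinv.atTop_add ((tendsto_nhdsWithin_iff.1 hsqrt).1.const_mul r)

theorem tendsto_subordinationPrimitive_atTop_of_pos (p : ℝ) {r : ℝ} (hr : 0 < r) :
    Tendsto (subordinationPrimitive p r) atTop (𝓝 (exp (2 * p * r) * (√π / 2))) :=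
  (tendsto_intervalIntegral_gaussian_atTop.comp
    ((tendsto_const_nhds.div_atTop tendsto_sqrt_atTop).add_atTop
      (tendsto_sqrt_atTop.const_mul_atTop hr))).const_mul _

theorem tendsto_subordinationPrimitive_atTop_of_neg (p : ℝ) {r : ℝ} (hr : r < 0) :
    Tendsto (subordinationPrimitive p r) atTop (𝓝 (exp (2 * p * r) * -(√π / 2))) :=
  (tendsto_intervalIntegral_gaussian_atBot.comp
    ((tendsto_const_nhds.div_atTop tendsto_sqrt_atTop).add_atBot
      (tendsto_sqrt_atTop.const_mul_atTop_of_neg hr))).const_mul _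

theorem integrableOn_subordination {p : ℝ} (hp : 0 < p) (q : ℝ) :
    IntegrableOn (fun s : ℝ => s ^ (-(3 / 2) : ℝ) * exp (-(p ^ 2 / s) - q ^ 2 * s)) (Ioi 0) := by
  have h := integrableOn_rpow_mul_exp_neg_div one_half_pos (pow_pos hp 2)
  rw [show -(1 / 2 : ℝ) - 1 = -(3 / 2) by norm_num] at h
  refine Integrable.mono' h (by fun_prop) ?_
  filter_upwards [ae_restrict_mem measurableSet_Ioi] with s (hs : 0 < s)
  rw [norm_of_nonneg (by positivity)]
  gcongr
  linarith [mul_nonneg (sq_nonneg q) hs.le]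

theorem integral_subordination {p q : ℝ} (hp : 0 < p) (hq : 0 < q) :
    ∫ s in Ioi (0 : ℝ), s ^ (-(3 / 2) : ℝ) * exp (-(p ^ 2 / s) - q ^ 2 * s) =
      √π / p * exp (-(2 * p * q)) := by
  have hderiv : ∀ s ∈ Ioi (0 : ℝ),
      HasDerivAt (fun s => subordinationPrimitive p q s + subordinationPrimitive p (-q) s)
        (-p * (s ^ (-(3 / 2) : ℝ) * exp (-(p ^ 2 / s) - q ^ 2 * s))) s := by
    intro s (hs : 0 < s)
    have : 0 < √s := sqrt_pos.2 hs
    have hpow : s ^ (-(3 / 2) : ℝ) = (s * √s)⁻¹ := by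
      rw [sqrt_eq_rpow, ← rpow_one_add' hs.le (by norm_num), ← rpow_neg hs.le]
      norm_num
    refine ((hasDerivAt_subordinationPrimitive p q hs).add
      (hasDerivAt_subordinationPrimitive p (-q) hs)).congr_deriv ?_
    rw [hpow, neg_sq]
    field_simp
    ring
  have h := integral_Ioi_of_hasDerivAt_of_tendsto_nhdsGT hderiv
    ((integrableOn_subordination hp q).const_mul _)
    ((tendsto_subordinationPrimitive_nhdsGT_zero hp q).add
      (tendsto_subordinationPrimitive_nhdsGT_zero hp (-q)))
    ((tendsto_subordinationPrimitive_atTop_of_pos p hq).add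
      (tendsto_subordinationPrimitive_atTop_of_neg p (neg_lt_zero.2 hq)))
  rw [integral_const_mul] at h
  rw [← mul_right_inj' (neg_ne_zero.2 hp.ne'), h, show -(2 * p * q) = 2 * p * -q by ring]
  field_simp
  ring

end ExponentialIntegrals

section WeakFourierTransform

open Filter Module

section Superposition

variable {S α E : Type*} [MeasurableSpace S] [MeasurableSpace α] {μ : Measure S} [SFinite μ]
  {ν : Measure α} [SFinite ν] [NormedAddCommGroup E] [NormedSpace ℝ E]
  {P : S → α → ℝ} {K : α → ℝ} {g : α → E}

theorem integrable_smul_of_superposition (hP : Measurable (Function.uncurry P))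
    (hP0 : ∀ᵐ s ∂μ, ∀ y, 0 ≤ P s y) (hPint : ∀ᵐ y ∂ν, Integrable (P · y) μ)
    (hPK : ∀ᵐ y ∂ν, ∫ s, P s y ∂μ = K y) (hg : AEStronglyMeasurable g ν)
    (hKg : Integrable (fun y => K y • g y) ν) :
    Integrable (fun z : S × α => P z.1 z.2 • g z.2) (μ.prod ν) := by
  have hmeas : AEStronglyMeasurable (fun z : S × α => P z.1 z.2 • g z.2) (μ.prod ν) :=
    hP.aestronglyMeasurable.smul hg.comp_snd
  refine (integrable_prod_iff' hmeas).2 ⟨?_, hKg.norm.congr ?_⟩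
  · filter_upwards [hPint] with y hy using hy.smul_const (g y)
  · filter_upwards [hPK] with y hy
    have hnorm : (fun s => ‖P s y • g y‖) =ᵐ[μ] fun s => P s y * ‖g y‖ := by
      filter_upwards [hP0] with s hs
      rw [norm_smul, norm_of_nonneg (hs y)]
    have hK0 : 0 ≤ K y := hy ▸ integral_nonneg_of_ae (hP0.mono fun s hs => hs y)
    rw [integral_congr_ae hnorm, integral_mul_const, hy, norm_smul, norm_of_nonneg hK0]

theorem integral_smul_eq_integral_integral_superposition [CompleteSpace E]
    (hP : Measurable (Function.uncurry P))
    (hP0 : ∀ᵐ s ∂μ, ∀ y, 0 ≤ P s y) (hPint : ∀ᵐ y ∂ν, Integrable (P · y) μ)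
    (hPK : ∀ᵐ y ∂ν, ∫ s, P s y ∂μ = K y) (hg : AEStronglyMeasurable g ν)
    (hKg : Integrable (fun y => K y • g y) ν) :
    ∫ y, K y • g y ∂ν = ∫ s, ∫ y, P s y • g y ∂ν ∂μ := by
  rw [integral_integral_swap (integrable_smul_of_superposition hP hP0 hPint hPK hg hKg)]
  refine integral_congr_ae ?_
  filter_upwards [hPK] with y hy
  rw [integral_smul_const, hy]

end Superposition

variable {V : Type*} [NormedAddCommGroup V] [InnerProductSpace ℝ V] [MeasurableSpace V]
  [BorelSpace V] [FiniteDimensional ℝ V]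

theorem continuous_fourier_of_integrable {g : V → ℂ} (hg : Integrable g) : Continuous (𝓕 g) :=
  VectorFourier.fourierIntegral_continuous continuous_fourierChar
    (by simpa using! continuous_inner) hg

theorem norm_fourier_le_integral_norm (g : V → ℂ) (η : V) : ‖𝓕 g η‖ ≤ ∫ y, ‖g y‖ :=
  VectorFourier.norm_fourierIntegral_le_integral_norm ..

theorem fourier_fourierChar_smul (ξ : V) (g : V → ℂ) (η : V) :
    𝓕 (fun y => 𝐞 (-⟪y, ξ⟫) • g y) η = 𝓕 g (η + ξ) := by
  simp only [fourier_eq, smul_smul, ← AddChar.map_add_eq_mul, inner_add_right, neg_add]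

/-- `k` is the Fourier transform of `K` in the weak sense: the duality `∫ K g = ∫ k 𝓕g` holds for
every integrable `g` for which both sides converge absolutely. -/
def IsWeakFourierTransform (K k : V → ℝ) : Prop :=
  ∀ ⦃g : V → ℂ⦄, Integrable g → Integrable (fun y => K y • g y) →
    Integrable (fun η => k η • 𝓕 g η) → ∫ y, K y • g y = ∫ η, k η • 𝓕 g η

namespace IsWeakFourierTransform

theorem const_mul {K k : V → ℝ} (h : IsWeakFourierTransform K k) (c : ℝ) :
    IsWeakFourierTransform (fun y => c * K y) (fun η => c * k η) := by
  intro g hg hK hk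
  obtain rfl | hc := eq_or_ne c 0
  · simp
  simp only [mul_smul] at hK hk ⊢
  rw [integral_smul, integral_smul,
    h hg ((integrable_smul_iff hc _).1 hK) ((integrable_smul_iff hc _).1 hk)]

theorem superposition {S : Type*} [MeasurableSpace S] {μ : Measure S} [SFinite μ]
    {P p : S → V → ℝ} {K k : V → ℝ} (h : ∀ᵐ s ∂μ, IsWeakFourierTransform (P s) (p s))
    (hP : Measurable (Function.uncurry P)) (hp : Measurable (Function.uncurry p))
    (hP0 : ∀ᵐ s ∂μ, ∀ y, 0 ≤ P s y) (hp0 : ∀ᵐ s ∂μ, ∀ η, 0 ≤ p s η)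
    (hPint : ∀ᵐ y, Integrable (P · y) μ) (hpint : ∀ᵐ η, Integrable (p · η) μ)
    (hPK : ∀ᵐ y, ∫ s, P s y ∂μ = K y) (hpk : ∀ᵐ η, ∫ s, p s η ∂μ = k η) :
    IsWeakFourierTransform K k := by
  intro g hg hKg hkg
  have hFg : AEStronglyMeasurable (𝓕 g) :=
    (continuous_fourier_of_integrable hg).aestronglyMeasurable
  rw [integral_smul_eq_integral_integral_superposition hP hP0 hPint hPK hg.1 hKg,
    integral_smul_eq_integral_integral_superposition hp hp0 hpint hpk hFg hkg]
  refine integral_congr_ae ?_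
  filter_upwards [h,
    (integrable_smul_of_superposition hP hP0 hPint hPK hg.1 hKg).prod_right_ae,
    (integrable_smul_of_superposition hp hp0 hpint hpk hFg hkg).prod_right_ae] with s hs h₁ h₂
  exact hs hg h₁ h₂

theorem fourier_smul {P p : V → ℝ} (h : IsWeakFourierTransform P p) (hp : Integrable p)
    {g : V → ℂ} (hg : Integrable g) (hPg : Integrable (fun y => P y • g y)) (ξ : V) :
    𝓕 (fun y => P y • g y) ξ = ∫ η, p η • 𝓕 g (η + ξ) := by
  have hmod : Integrable (fun y => 𝐞 (-⟪y, ξ⟫) • g y) :=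
    (fourierIntegral_convergent_iff ξ).2 hg
  have hcomm : (fun y => 𝐞 (-⟪y, ξ⟫) • P y • g y) = fun y => P y • 𝐞 (-⟪y, ξ⟫) • g y :=
    funext fun y => smul_comm ..
  have hPmod := hcomm ▸ (fourierIntegral_convergent_iff ξ).2 hPg
  have hpF : Integrable (fun η => p η • 𝓕 (fun y => 𝐞 (-⟪y, ξ⟫) • g y) η) :=
    hp.smul_bdd _ (continuous_fourier_of_integrable hmod).aestronglyMeasurable
      (Eventually.of_forall (norm_fourier_le_integral_norm _))
  rw [fourier_eq, hcomm, h hmod hPmod hpF]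
  simp only [fourier_fourierChar_smul]

end IsWeakFourierTransform

theorem fourier_exp_neg_pi_mul_norm_sq_div {s : ℝ} (hs : 0 < s) (y : V) :
    𝓕 (fun v : V => (exp (-(π * ‖v‖ ^ 2 / s)) : ℂ)) y =
      ((s ^ (finrank ℝ V / 2 : ℝ) * exp (-(π * ‖y‖ ^ 2 * s)) : ℝ) : ℂ) := by
  have hre : 0 < (π / s : ℂ).re := by
    rw [← Complex.ofReal_div, Complex.ofReal_re]
    positivity
  have hπ : (π : ℂ) ≠ 0 := by exact_mod_cast pi_ne_zero
  have h := fourier_gaussian_innerProductSpace hre y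
  rw [div_div_cancel₀ hπ, show -(π : ℂ) ^ 2 * ‖y‖ ^ 2 / (π / s) = -(π * ‖y‖ ^ 2 * s) by
    field_simp] at h
  rw [Complex.ofReal_mul, Complex.ofReal_cpow hs.le]
  push_cast
  rw [← h]
  congr! 3
  ring

theorem isWeakFourierTransform_gaussian {s : ℝ} (hs : 0 < s) :
    IsWeakFourierTransform (fun y : V => exp (-(π * ‖y‖ ^ 2 * s)))
      (fun η => s ^ (-(finrank ℝ V / 2 : ℝ)) * exp (-(π * ‖η‖ ^ 2 / s))) := by
  intro g hg _ _
  have hG : Integrable (fun v : V => (exp (-(π * ‖v‖ ^ 2 / s)) : ℂ)) := by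
    have hre : 0 < (π / s : ℂ).re := by
      rw [← Complex.ofReal_div, Complex.ofReal_re]
      positivity
    refine (GaussianFourier.integrable_cexp_neg_mul_sq_norm_add hre 0 (0 : V)).congr
      (Eventually.of_forall fun v => ?_)
    push_cast
    congr 1
    simp
    ring
  have hduality : s ^ (finrank ℝ V / 2 : ℝ) • ∫ y, exp (-(π * ‖y‖ ^ 2 * s)) • g y =
      ∫ η, exp (-(π * ‖η‖ ^ 2 / s)) • 𝓕 g η := by
    have h : ∫ y, 𝓕 (fun v : V => (exp (-(π * ‖v‖ ^ 2 / s)) : ℂ)) y • g y =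
        ∫ η, (exp (-(π * ‖η‖ ^ 2 / s)) : ℂ) • 𝓕 g η := by
      simpa using! VectorFourier.integral_fourierIntegral_smul_eq_flip (L := innerₗ V)
        continuous_fourierChar (by simpa using! continuous_inner) hG hg
    simpa only [fourier_exp_neg_pi_mul_norm_sq_div hs, Complex.coe_smul, mul_smul,
      integral_smul] using h
  simp only [mul_smul, integral_smul, ← hduality]
  rw [rpow_neg hs.le, inv_smul_smul₀ (rpow_pos_of_pos hs _).ne']

end WeakFourierTransform

section RieszPoisson

open Set Filter Module

variable {V : Type*} [NormedAddCommGroup V] [InnerProductSpace ℝ V] [MeasurableSpace V]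
  [BorelSpace V] [FiniteDimensional ℝ V]

theorem IsWeakFourierTransform.gaussian_superposition {w : ℝ → ℝ} (hw : Measurable w)
    (hw0 : ∀ s ∈ Ioi (0 : ℝ), 0 ≤ w s) {K k : V → ℝ}
    (hKint : ∀ᵐ y : V, IntegrableOn (fun s => w s * exp (-(π * ‖y‖ ^ 2 * s))) (Ioi 0))
    (hkint : ∀ᵐ η : V, IntegrableOn
      (fun s => w s * (s ^ (-(finrank ℝ V / 2 : ℝ)) * exp (-(π * ‖η‖ ^ 2 / s)))) (Ioi 0))
    (hK : ∀ᵐ y : V, ∫ s in Ioi (0 : ℝ), w s * exp (-(π * ‖y‖ ^ 2 * s)) = K y)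
    (hk : ∀ᵐ η : V, ∫ s in Ioi (0 : ℝ),
      w s * (s ^ (-(finrank ℝ V / 2 : ℝ)) * exp (-(π * ‖η‖ ^ 2 / s))) = k η) :
    IsWeakFourierTransform K k := by
  have hpos : ∀ᵐ s : ℝ ∂volume.restrict (Ioi 0), 0 < s := ae_restrict_mem measurableSet_Ioi
  refine superposition (hpos.mono fun s hs => (isWeakFourierTransform_gaussian hs).const_mul (w s))
    (by fun_prop) (by fun_prop) (hpos.mono fun s hs y => ?_) (hpos.mono fun s hs η => ?_)
    hKint hkint hK hk
  · have := hw0 s hs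
    positivity
  · have := hw0 s hs
    positivity

theorem one_div_pi_mul_sq_rpow {r : ℝ} (hr : 0 ≤ r) (b : ℝ) :
    (1 / (π * r ^ 2)) ^ (b / 2) = π ^ (-(b / 2)) * r ^ (-b) := by
  rw [one_div, inv_rpow (by positivity), ← rpow_neg (by positivity),
    mul_rpow (by positivity) (by positivity), ← rpow_natCast_mul hr]
  congr 2
  push_cast
  ring

/-- The constant `π^{γ-d/2} Γ((d-γ)/2) / Γ(γ/2)` in the Fourier transform of `|x|^{-γ}`. -/
noncomputable def rieszConst (d : ℕ) (γ : ℝ) : ℝ :=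
  π ^ (γ - d / 2) * Gamma ((d - γ) / 2) / Gamma (γ / 2)

theorem rieszConst_pos {d : ℕ} {γ : ℝ} (hγ0 : 0 < γ) (hγd : γ < d) : 0 < rieszConst d γ := by
  have := Gamma_pos_of_pos (half_pos (sub_pos.2 hγd))
  have := Gamma_pos_of_pos (half_pos hγ0)
  unfold rieszConst
  positivity

theorem isWeakFourierTransform_norm_rpow {γ : ℝ} (hγ0 : 0 < γ) (hγd : γ < finrank ℝ V) :
    IsWeakFourierTransform (fun y : V => ‖y‖ ^ (-γ))
      (fun η => rieszConst (finrank ℝ V) γ * ‖η‖ ^ (γ - finrank ℝ V)) := by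
  set n : ℕ := finrank ℝ V
  have : Nontrivial V := nontrivial_of_finrank_pos (R := ℝ) (by exact_mod_cast hγ0.trans hγd)
  have hγ : 0 < γ / 2 := half_pos hγ0
  have hnγ : 0 < (n - γ) / 2 := half_pos (sub_pos.2 hγd)
  have hne : ∀ᵐ y : V, 0 < π * ‖y‖ ^ 2 := by
    filter_upwards [Measure.ae_ne volume (0 : V)] with y hy
    positivity
  have hweight (η : V) : EqOn
      (fun s : ℝ => s ^ (-((n - γ) / 2) - 1) * exp (-(π * ‖η‖ ^ 2 / s)))
      (fun s => s ^ (γ / 2 - 1) * (s ^ (-(n / 2 : ℝ)) * exp (-(π * ‖η‖ ^ 2 / s)))) (Ioi 0) := by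
    intro s hs
    simp only
    rw [← mul_assoc, ← rpow_add hs]
    ring_nf
  have h := (IsWeakFourierTransform.gaussian_superposition (V := V)
    (w := fun s => s ^ (γ / 2 - 1))
    (K := fun y => π ^ (-(γ / 2)) * ‖y‖ ^ (-γ) * Gamma (γ / 2))
    (k := fun η => π ^ (-((n - γ) / 2)) * ‖η‖ ^ (-(n - γ)) * Gamma ((n - γ) / 2)) (by fun_prop)
    (fun s hs => rpow_nonneg (le_of_lt hs) _)
    (hne.mono fun y hy => ?_) (hne.mono fun η hη => ?_) (hne.mono fun y hy => ?_)
    (hne.mono fun η hη => ?_)).const_mul (π ^ (γ / 2) / Gamma (γ / 2))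
  · have hΓ := (Gamma_pos_of_pos hγ).ne'
    convert h using 2
    · rw [rpow_neg pi_nonneg]
      field_simp
    · rw [rieszConst, neg_sub, show γ - n / 2 = γ / 2 + -((n - γ) / 2) by ring, rpow_add pi_pos]
      ring
  · simpa using integrableOn_rpow_mul_exp_neg_mul_rpow (s := γ / 2 - 1) (by linarith) one_pos hy
  · exact (integrableOn_rpow_mul_exp_neg_div hnγ hη).congr_fun (hweight η) measurableSet_Ioi
  · rw [integral_rpow_mul_exp_neg_mul_Ioi hγ hy, one_div_pi_mul_sq_rpow (norm_nonneg y)]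
  · rw [← setIntegral_congr_fun measurableSet_Ioi (hweight η),
      integral_rpow_mul_exp_neg_div hnγ hη, one_div_pi_mul_sq_rpow (norm_nonneg η)]

/-- The constant `2 π^{-(d+1)/2} Γ((d+1)/2)`, for which the Fourier transform of `e^{-a|x|}` is
`poissonConst d • S_{a,1/(4π)}`. -/
noncomputable def poissonConst (d : ℕ) : ℝ :=
  2 * π ^ (-((d + 1) / 2 : ℝ)) * Gamma ((d + 1) / 2)

theorem poissonConst_pos (d : ℕ) : 0 < poissonConst d := by
  have : 0 < Gamma ((d + 1) / 2 : ℝ) := Gamma_pos_of_pos (by positivity)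
  unfold poissonConst
  positivity

/-- The weight `s ↦ a/(2π) s^{-3/2} e^{-a²/(4πs)}` that writes `e^{-ar}` as a superposition of the
Gaussians `e^{-πr²s}`. -/
noncomputable def poissonWeight (a s : ℝ) : ℝ :=
  a / (2 * π) * (s ^ (-(3 / 2) : ℝ) * exp (-(a ^ 2 / (4 * π) / s)))

theorem measurable_poissonWeight (a : ℝ) : Measurable (poissonWeight a) := by
  unfold poissonWeight
  fun_prop

theorem poissonWeight_mul_exp (a r s : ℝ) :
    poissonWeight a s * exp (-(π * r ^ 2 * s)) = a / (2 * π) *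
      (s ^ (-(3 / 2) : ℝ) * exp (-((a / (2 * √π)) ^ 2 / s) - (√π * r) ^ 2 * s)) := by
  rw [poissonWeight, div_pow, mul_pow, mul_pow, sq_sqrt pi_nonneg, sub_eq_add_neg, exp_add]
  ring_nf

theorem poissonWeight_mul_rpow_mul_exp (a r b : ℝ) {s : ℝ} (hs : 0 < s) :
    poissonWeight a s * (s ^ (-(b / 2)) * exp (-(π * r ^ 2 / s))) = a / (2 * π) *
      (s ^ (-((b + 1) / 2) - 1) * exp (-((a ^ 2 / (4 * π) + π * r ^ 2) / s))) := by
  rw [poissonWeight, show -((b + 1) / 2) - 1 = -(3 / 2) + -(b / 2) by ring, rpow_add hs, add_div,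
    neg_add, exp_add]
  ring

theorem integral_poissonWeight_mul_exp {a r : ℝ} (ha : 0 < a) (hr : 0 < r) :
    ∫ s in Ioi (0 : ℝ), poissonWeight a s * exp (-(π * r ^ 2 * s)) = exp (-(a * r)) := by
  have : 0 < √π := sqrt_pos.2 pi_pos
  have hexponent : 2 * (a / (2 * √π)) * (√π * r) = a * r := by field_simp
  have hfactor : a / (2 * π) * (√π / (a / (2 * √π))) = 1 := by
    field_simp
    exact sq_sqrt pi_nonneg
  simp only [poissonWeight_mul_exp]
  rw [integral_const_mul, integral_subordination (by positivity) (by positivity), hexponent,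
    ← mul_assoc, hfactor, one_mul]

theorem isWeakFourierTransform_exp_neg_mul_norm [Nontrivial V] {a : ℝ} (ha : 0 < a) :
    IsWeakFourierTransform (fun y : V => exp (-(a * ‖y‖))) (fun η => poissonConst (finrank ℝ V) *
      (a / (4 * π) * ((a / (2 * π)) ^ 2 + ‖η‖ ^ 2) ^ (-((finrank ℝ V + 1) / 2 : ℝ)))) := by
  set n : ℕ := finrank ℝ V
  have hne : ∀ᵐ y : V, 0 < ‖y‖ := by
    filter_upwards [Measure.ae_ne volume (0 : V)] with y hy using norm_pos_iff.2 hy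
  have hn : (0 : ℝ) < (n + 1) / 2 := by positivity
  have hdenom (η : V) : 0 < a ^ 2 / (4 * π) + π * ‖η‖ ^ 2 := by positivity
  have hweight (η : V) : EqOn
      (fun s => poissonWeight a s * (s ^ (-(n / 2 : ℝ)) * exp (-(π * ‖η‖ ^ 2 / s))))
      (fun s => a / (2 * π) *
        (s ^ (-((n + 1) / 2 : ℝ) - 1) * exp (-((a ^ 2 / (4 * π) + π * ‖η‖ ^ 2) / s)))) (Ioi 0) :=
    fun s hs => poissonWeight_mul_rpow_mul_exp a ‖η‖ n hs
  refine IsWeakFourierTransform.gaussian_superposition (measurable_poissonWeight a)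
    (fun s (hs : 0 < s) => by unfold poissonWeight; positivity) (hne.mono fun y _ => ?_)
    (Eventually.of_forall fun η => ?_)
    (hne.mono fun y hy => integral_poissonWeight_mul_exp ha hy) (Eventually.of_forall fun η => ?_)
  · simp only [poissonWeight_mul_exp]
    exact (integrableOn_subordination (by positivity) _).const_mul _
  · exact IntegrableOn.congr_fun ((integrableOn_rpow_mul_exp_neg_div hn (hdenom η)).const_mul _)
      (hweight η).symm measurableSet_Ioi
  · rw [setIntegral_congr_fun measurableSet_Ioi (hweight η), integral_const_mul,
      integral_rpow_mul_exp_neg_div hn (hdenom η), poissonConst, one_div, inv_rpow (hdenom η).le,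
      ← rpow_neg (hdenom η).le,
      show a ^ 2 / (4 * π) + π * ‖η‖ ^ 2 = π * ((a / (2 * π)) ^ 2 + ‖η‖ ^ 2) by field_simp; ring,
      mul_rpow pi_nonneg (by positivity)]
    field_simp
    ring

end RieszPoisson

section SingularKernels

open Set Filter Module

theorem norm_norm_rpow_neg_smul_le {V E : Type*} [NormedAddCommGroup V] [NormedAddCommGroup E]
    [NormedSpace ℝ E] {β C : ℝ} {F : V → E} (hβ : 0 ≤ β) (hC : ∀ x, ‖F x‖ ≤ C) (x : V) :
    ‖‖x‖ ^ (-β) • F x‖ ≤ (Metric.ball 0 1).indicator (fun x : V => ‖x‖ ^ (-β)) x * C + ‖F x‖ := by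
  have hpow : 0 ≤ ‖x‖ ^ (-β) := by positivity
  rw [norm_smul, norm_of_nonneg hpow]
  by_cases hx : x ∈ Metric.ball (0 : V) 1
  · rw [indicator_of_mem hx]
    exact le_add_of_le_of_nonneg (mul_le_mul_of_nonneg_left (hC x) hpow) (norm_nonneg _)
  · rw [indicator_of_notMem hx, zero_mul, zero_add]
    exact mul_le_of_le_one_left (norm_nonneg _)
      (rpow_le_one_of_one_le_of_nonpos (by simpa using hx) (neg_nonpos.2 hβ))

variable {V : Type*} [NormedAddCommGroup V] [InnerProductSpace ℝ V] [MeasurableSpace V]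
  [BorelSpace V] [FiniteDimensional ℝ V]

theorem IsWeakFourierTransform.mul {K k P p : V → ℝ} {C : ℝ} (hK : IsWeakFourierTransform K k)
    (hP : IsWeakFourierTransform P p) (hPmeas : AEStronglyMeasurable P) (hPC : ∀ y, ‖P y‖ ≤ C)
    (hk : Measurable k) (hk0 : ∀ η, 0 ≤ k η) (hp : Measurable p) (hp0 : ∀ η, 0 ≤ p η)
    (hpint : Integrable p) (hpeven : ∀ η, p (-η) = p η)
    (hpk : ∀ ξ, Integrable fun η => p η * k (ξ - η)) :
    IsWeakFourierTransform (fun y => K y * P y) (fun ξ => ∫ η, p η * k (ξ - η)) := by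
  intro g hg hKPg hpkg
  have hFg : AEStronglyMeasurable (𝓕 g) :=
    (continuous_fourier_of_integrable hg).aestronglyMeasurable
  have hPg : Integrable fun y => P y • g y :=
    hg.bdd_smul _ hPmeas (Eventually.of_forall hPC)
  have hFPg (η : V) : 𝓕 (fun y => P y • g y) η = ∫ ξ, p (η - ξ) • 𝓕 g ξ := by
    rw [hP.fourier_smul hpint hg hPg, ← integral_sub_right_eq_self _ η]
    simp only [sub_add_cancel, ← hpeven (η - _), neg_sub]
  have hreflect (ξ η : V) : p (η - ξ) * k η = p (ξ - η) * k (ξ - (ξ - η)) := by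
    rw [← hpeven, neg_sub, sub_sub_cancel]
  have hint (ξ : V) : Integrable fun η => p (η - ξ) * k η := by
    simpa only [hreflect] using (hpk ξ).comp_sub_left ξ
  have hval (ξ : V) : ∫ η, p (η - ξ) * k η = ∫ η, p η * k (ξ - η) := by
    simpa only [hreflect] using integral_sub_left_eq_self (fun η => p η * k (ξ - η)) volume ξ
  have hmeas : Measurable (Function.uncurry fun η ξ => p (η - ξ) * k η) := by fun_prop
  have hnonneg : ∀ᵐ η : V, ∀ ξ, 0 ≤ p (η - ξ) * k η :=
    Eventually.of_forall fun η ξ => mul_nonneg (hp0 _) (hk0 _)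
  have hinner (η : V) : ∫ ξ, (p (η - ξ) * k η) • 𝓕 g ξ = k η • 𝓕 (fun y => P y • g y) η := by
    simp only [mul_comm (p _), mul_smul, integral_smul, hFPg]
  have hkFPg : Integrable fun η => k η • 𝓕 (fun y => P y • g y) η := by
    simpa only [hinner] using (integrable_smul_of_superposition hmeas hnonneg
      (Eventually.of_forall hint) (Eventually.of_forall hval) hFg hpkg).integral_prod_left
  simp only [mul_smul] at hKPg ⊢
  rw [hK hPg hKPg hkFPg, integral_smul_eq_integral_integral_superposition hmeas hnonneg
    (Eventually.of_forall hint) (Eventually.of_forall hval) hFg hpkg]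
  simp only [hinner]

theorem integrableOn_ball_norm_rpow_neg [Nontrivial V] {β : ℝ} (hβ : β < finrank ℝ V) :
    IntegrableOn (fun x : V => ‖x‖ ^ (-β)) (Metric.ball 0 1) := by
  rw [integrableOn_fun_norm_addHaar volume (f := fun r : ℝ => r ^ (-β))]
  have h : IntegrableOn (fun r : ℝ => r ^ (finrank ℝ V - 1 - β)) (Ioo 0 1) :=
    (intervalIntegrable_iff_integrableOn_Ioo_of_le zero_le_one).1
      (intervalIntegral.intervalIntegrable_rpow' (by linarith))
  refine h.congr_fun (fun r hr => ?_) measurableSet_Ioo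
  simp only [smul_eq_mul]
  rw [← rpow_natCast, ← rpow_add hr.1, Nat.cast_sub finrank_pos, Nat.cast_one, sub_eq_add_neg _ β]

section

variable {E : Type*} [NormedAddCommGroup E] [NormedSpace ℝ E] {β C : ℝ} {F : V → E}

theorem integrable_norm_rpow_neg_smul [Nontrivial V] (hβ0 : 0 ≤ β) (hβ : β < finrank ℝ V)
    (hF : Integrable F) (hC : ∀ x, ‖F x‖ ≤ C) : Integrable fun x => ‖x‖ ^ (-β) • F x :=
  (((integrableOn_ball_norm_rpow_neg hβ).integrable_indicator measurableSet_ball).mul_const C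
    |>.add hF.norm).mono' (Measurable.aestronglyMeasurable (by fun_prop) |>.smul hF.1)
    (Eventually.of_forall (norm_norm_rpow_neg_smul_le hβ0 hC))

theorem integrable_exp_neg_mul_norm_mul_norm_rpow_neg_smul [Nontrivial V] {a : ℝ} (ha : 0 ≤ a)
    (hβ0 : 0 ≤ β) (hβ : β < finrank ℝ V) (hF : Integrable F) (hC : ∀ x, ‖F x‖ ≤ C) :
    Integrable fun x => (exp (-(a * ‖x‖)) * ‖x‖ ^ (-β)) • F x := by
  simp only [mul_smul]
  refine (integrable_norm_rpow_neg_smul hβ0 hβ hF hC).bdd_smul (1 : ℝ)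
    (Measurable.aestronglyMeasurable (by fun_prop)) (Eventually.of_forall fun x => ?_)
  rw [norm_of_nonneg (exp_pos _).le, exp_le_one_iff]
  exact neg_nonpos.2 (by positivity)

theorem norm_integral_norm_rpow_neg_smul_le [Nontrivial V] (hβ0 : 0 ≤ β) (hβ : β < finrank ℝ V)
    (hF : Integrable F) (hC : ∀ x, ‖F x‖ ≤ C) :
    ‖∫ x, ‖x‖ ^ (-β) • F x‖ ≤ (∫ x in Metric.ball (0 : V) 1, ‖x‖ ^ (-β)) * C + ∫ x, ‖F x‖ := by
  have hball := ((integrableOn_ball_norm_rpow_neg hβ).integrable_indicator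
    measurableSet_ball).mul_const C
  rw [← integral_indicator measurableSet_ball, ← integral_mul_const, ← integral_add hball hF.norm]
  exact norm_integral_le_of_norm_le (hball.add hF.norm)
    (Eventually.of_forall (norm_norm_rpow_neg_smul_le hβ0 hC))

end

end SingularKernels

section HartreeKernel

open Filter

variable {d : ℕ} {γ a t : ℝ}

theorem riesz_smul (r : ℝ) (x : EuclideanSpace ℝ (Fin d)) :
    riesz d γ (r • x) = |r| ^ (γ - d) * riesz d γ x := by
  rw [riesz, riesz, norm_smul, mul_rpow (norm_nonneg _) (norm_nonneg _), norm_eq_abs]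

theorem Skernel_mul_smul {r : ℝ} (hr : r ≠ 0) (ξ : EuclideanSpace ℝ (Fin d)) :
    Skernel d a (r * t) (r • ξ) = (|r| ^ d)⁻¹ * Skernel d a t ξ := by
  have hr' : 0 < |r| := abs_pos.2 hr
  have hbase : 4 * a ^ 2 * (r * t) ^ 2 + ‖r • ξ‖ ^ 2 =
      |r| ^ 2 * (4 * a ^ 2 * t ^ 2 + ‖ξ‖ ^ 2) := by
    rw [norm_smul, norm_eq_abs, mul_pow, mul_pow, sq_abs]
    ring
  have hpow : (|r| ^ 2) ^ (-(((d : ℝ) + 1) / 2)) = (|r| ^ d)⁻¹ * |r|⁻¹ := by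
    rw [← rpow_natCast |r| 2, ← rpow_mul hr'.le, ← mul_inv, ← pow_succ, ← rpow_natCast,
      ← rpow_neg hr'.le]
    push_cast
    ring_nf
  rw [Skernel, Skernel, hbase, mul_rpow (by positivity) (by positivity), hpow, abs_mul]
  field_simp

theorem hartreeKernel_mul_smul {r : ℝ} (hr : r ≠ 0) (ξ : EuclideanSpace ℝ (Fin d)) :
    hartreeKernel d γ a (r * t) (r • ξ) = |r| ^ (γ - d) * hartreeKernel d γ a t ξ := by
  unfold hartreeKernel
  split_ifs
  · exact riesz_smul r ξ
  have hr' : |r| ^ d ≠ 0 := pow_ne_zero _ (abs_ne_zero.2 hr)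
  have h := Measure.integral_comp_smul volume
    (fun y => Skernel d a (r * t) y * riesz d γ (r • ξ - y)) r
  simp only [Skernel_mul_smul hr, ← smul_sub, riesz_smul, mul_assoc, integral_const_mul,
    finrank_euclideanSpace_fin, abs_inv, abs_pow, smul_eq_mul] at h
  rw [convR, ← mul_left_cancel₀ (inv_ne_zero hr') h, convR, ← integral_const_mul]
  simp only [mul_left_comm]

theorem Skernel_nonneg (ha : 0 ≤ a) (ξ : EuclideanSpace ℝ (Fin d)) : 0 ≤ Skernel d a t ξ := by
  unfold Skernel
  positivity

theorem Skernel_neg (ξ : EuclideanSpace ℝ (Fin d)) : Skernel d a t (-ξ) = Skernel d a t ξ := by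
  simp only [Skernel, norm_neg]

theorem measurable_Skernel : Measurable (Skernel d a t) := by
  unfold Skernel
  fun_prop

theorem measurable_riesz : Measurable (riesz d γ) := by
  unfold riesz
  fun_prop

theorem norm_Skernel_le (ha : 0 < a) (ht : t ≠ 0) (ξ : EuclideanSpace ℝ (Fin d)) :
    ‖Skernel d a t ξ‖ ≤ Skernel d a t 0 := by
  have hat : 0 < a ^ 2 * t ^ 2 := by positivity
  rw [norm_of_nonneg (Skernel_nonneg ha.le ξ), Skernel, Skernel]
  refine mul_le_mul_of_nonneg_left
    (rpow_le_rpow_of_nonpos ?_ ?_ (neg_nonpos.2 (by positivity))) (by positivity) <;>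
  · rw [norm_zero]
    nlinarith [sq_nonneg ‖ξ‖]

theorem integrable_Skernel (ha : 0 < a) (ht : t ≠ 0) : Integrable (Skernel d a t) := by
  have ha' : 0 < 2 * a := by positivity
  have hunit : Integrable (Skernel d a (2 * a)⁻¹) := by
    have h : Skernel d a (2 * a)⁻¹ = fun ξ => 2⁻¹ * (1 + ‖ξ‖ ^ 2) ^ (-((d + 1 : ℝ) / 2)) := by
      ext ξ
      have hone : 4 * a ^ 2 * (2 * a)⁻¹ ^ 2 = 1 := by
        field_simp
        norm_num
      rw [Skernel, abs_of_pos (inv_pos.2 ha'), hone]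
      field_simp
    rw [h]
    simpa only [neg_div] using
      (integrable_rpow_neg_one_add_norm_sq (r := d + 1) (by simp)).const_mul 2⁻¹
  have hr : 2 * a * t ≠ 0 := by positivity
  refine (integrable_comp_smul_iff volume _ hr).1 ((hunit.const_mul (|2 * a * t| ^ d)⁻¹).congr
    (Eventually.of_forall fun ξ => ?_))
  dsimp only
  rw [← Skernel_mul_smul hr, mul_right_comm, mul_inv_cancel₀ ha'.ne', one_mul]

theorem measurable_convR {f g : EuclideanSpace ℝ (Fin d) → ℝ} (hf : Measurable f)
    (hg : Measurable g) : Measurable (convR f g) :=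
  (Measurable.stronglyMeasurable (by fun_prop :
    Measurable fun z : EuclideanSpace ℝ (Fin d) × EuclideanSpace ℝ (Fin d) =>
      f z.2 * g (z.1 - z.2))).integral_prod_right.measurable

theorem measurable_hartreeKernel : Measurable (hartreeKernel d γ a t) := by
  unfold hartreeKernel
  split_ifs
  exacts [measurable_riesz, measurable_convR measurable_Skernel measurable_riesz]

theorem integrable_riesz_smul [NeZero d] {E : Type*} [NormedAddCommGroup E] [NormedSpace ℝ E]
    (hγ0 : 0 < γ) (hγd : γ ≤ d) {F : EuclideanSpace ℝ (Fin d) → E} (hF : Integrable F) {C : ℝ}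
    (hC : ∀ x, ‖F x‖ ≤ C) : Integrable fun x => riesz d γ x • F x := by
  simpa only [riesz, neg_sub] using integrable_norm_rpow_neg_smul (β := d - γ) (sub_nonneg.2 hγd)
    (by rw [finrank_euclideanSpace_fin]; linarith) hF hC

theorem integrable_Skernel_mul_riesz [NeZero d] (hγ0 : 0 < γ) (hγd : γ ≤ d) (ha : 0 < a)
    (ht : t ≠ 0) (ξ : EuclideanSpace ℝ (Fin d)) :
    Integrable fun η => Skernel d a t η * riesz d γ (ξ - η) := by
  have h := (integrable_riesz_smul hγ0 hγd ((integrable_Skernel ha ht).comp_sub_left ξ)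
    (fun z => norm_Skernel_le ha ht (ξ - z))).comp_sub_left ξ
  simpa only [sub_sub_cancel, smul_eq_mul, mul_comm (riesz _ _ _)] using h

theorem exists_norm_hartreeKernel_le [NeZero d] (hγ0 : 0 < γ) (hγd : γ ≤ d) (ha : 0 < a)
    (ht : t ≠ 0) : ∃ C, ∀ ξ, ‖hartreeKernel d γ a t ξ‖ ≤ C := by
  have h (ξ : EuclideanSpace ℝ (Fin d)) := norm_integral_norm_rpow_neg_smul_le (β := d - γ)
    (sub_nonneg.2 hγd) (by rw [finrank_euclideanSpace_fin]; linarith)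
    ((integrable_Skernel ha ht).comp_sub_left ξ) (fun z => norm_Skernel_le ha ht (ξ - z))
  simp only [integral_sub_left_eq_self (fun z => ‖Skernel d a t z‖)] at h
  refine ⟨_, fun ξ => le_of_eq_of_le ?_ (h ξ)⟩
  rw [hartreeKernel, if_neg ha.ne', convR, ← integral_sub_left_eq_self _ _ ξ]
  simp only [sub_sub_cancel, riesz, neg_sub, smul_eq_mul, mul_comm (Skernel _ _ _ _)]

theorem integrable_hartreeKernel_smul (hγ0 : 0 < γ) (hγd : γ < d) (ha : 0 ≤ a) (ht : t ≠ 0)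
    {F : EuclideanSpace ℝ (Fin d) → ℂ} (hF : Integrable F) {C : ℝ} (hC : ∀ x, ‖F x‖ ≤ C) :
    Integrable fun x => hartreeKernel d γ a t x • F x := by
  have : NeZero d := ⟨Nat.cast_ne_zero.1 (hγ0.trans hγd).ne'⟩
  obtain rfl | ha := ha.eq_or_lt
  · simpa only [hartreeKernel, if_true] using integrable_riesz_smul hγ0 hγd.le hF hC
  · obtain ⟨B, hB⟩ := exists_norm_hartreeKernel_le hγ0 hγd.le ha ht
    exact hF.bdd_smul _ measurable_hartreeKernel.aestronglyMeasurable (Eventually.of_forall hB)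

/-- The ratio of the Fourier transform of `e^{-a|y|} |y|^{-γ}` to `hartreeKernel d γ a (4π)⁻¹`. -/
noncomputable def hartreeFourierConst (d : ℕ) (γ a : ℝ) : ℝ :=
  rieszConst d γ * if a = 0 then 1 else poissonConst d

theorem hartreeFourierConst_pos (hγ0 : 0 < γ) (hγd : γ < d) : 0 < hartreeFourierConst d γ a := by
  unfold hartreeFourierConst
  have := rieszConst_pos hγ0 hγd
  have := poissonConst_pos d
  positivity

theorem hartreeFourierConst_congr {b : ℝ} (h : a = 0 ↔ b = 0) :
    hartreeFourierConst d γ a = hartreeFourierConst d γ b := by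
  simp only [hartreeFourierConst, h]

theorem isWeakFourierTransform_riesz (hγ0 : 0 < γ) (hγd : γ < d) :
    IsWeakFourierTransform (fun y : EuclideanSpace ℝ (Fin d) => ‖y‖ ^ (-γ))
      (fun η => rieszConst d γ * riesz d γ η) := by
  simpa only [riesz, finrank_euclideanSpace_fin] using
    isWeakFourierTransform_norm_rpow (V := EuclideanSpace ℝ (Fin d)) hγ0
      (by rwa [finrank_euclideanSpace_fin])

theorem isWeakFourierTransform_Skernel [NeZero d] (ha : 0 < a) :
    IsWeakFourierTransform (fun y : EuclideanSpace ℝ (Fin d) => exp (-(a * ‖y‖)))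
      (fun η => poissonConst d * Skernel d a (4 * π)⁻¹ η) := by
  have hS (η : EuclideanSpace ℝ (Fin d)) : Skernel d a (4 * π)⁻¹ η =
      a / (4 * π) * ((a / (2 * π)) ^ 2 + ‖η‖ ^ 2) ^ (-((d + 1 : ℝ) / 2)) := by
    rw [Skernel, abs_of_pos (by positivity), ← div_eq_mul_inv,
      show 4 * a ^ 2 * (4 * π)⁻¹ ^ 2 = (a / (2 * π)) ^ 2 by field_simp; norm_num]
  simpa only [hS, finrank_euclideanSpace_fin] using
    isWeakFourierTransform_exp_neg_mul_norm (V := EuclideanSpace ℝ (Fin d)) ha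

theorem isWeakFourierTransform_hartreeKernel (hγ0 : 0 < γ) (hγd : γ < d) (ha : 0 ≤ a) :
    IsWeakFourierTransform (fun y : EuclideanSpace ℝ (Fin d) => exp (-(a * ‖y‖)) * ‖y‖ ^ (-γ))
      (fun η => hartreeFourierConst d γ a * hartreeKernel d γ a (4 * π)⁻¹ η) := by
  have : NeZero d := ⟨Nat.cast_ne_zero.1 (hγ0.trans hγd).ne'⟩
  have hriesz := isWeakFourierTransform_riesz hγ0 hγd
  obtain rfl | ha := ha.eq_or_lt
  · simpa only [hartreeFourierConst, hartreeKernel, if_true, zero_mul, neg_zero, exp_zero, one_mul,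
      mul_one] using hriesz
  have ht : (4 * π)⁻¹ ≠ 0 := by positivity
  have hmul (ξ η : EuclideanSpace ℝ (Fin d)) :
      poissonConst d * Skernel d a (4 * π)⁻¹ η * (rieszConst d γ * riesz d γ (ξ - η)) =
        hartreeFourierConst d γ a * (Skernel d a (4 * π)⁻¹ η * riesz d γ (ξ - η)) := by
    rw [hartreeFourierConst, if_neg ha.ne']
    ring
  have h := hriesz.mul (isWeakFourierTransform_Skernel ha) (C := 1)
    (Measurable.aestronglyMeasurable (by fun_prop))
    (fun y => by
      rw [norm_of_nonneg (exp_pos _).le, exp_le_one_iff]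
      exact neg_nonpos.2 (by positivity))
    (measurable_riesz.const_mul _)
    (fun η => mul_nonneg (rieszConst_pos hγ0 hγd).le (rpow_nonneg (norm_nonneg _) _))
    (measurable_Skernel.const_mul _)
    (fun η => mul_nonneg (poissonConst_pos d).le (Skernel_nonneg ha.le η))
    ((integrable_Skernel ha ht).const_mul _) (fun η => by rw [Skernel_neg])
    (fun ξ => by
      simpa only [hmul] using (integrable_Skernel_mul_riesz hγ0 hγd.le ha ht ξ).const_mul _)
  simpa only [hmul, integral_const_mul, hartreeKernel, if_neg ha.ne', convR, mul_comm (exp _)]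
    using h

end HartreeKernel

section TemperatePhases

variable {V : Type*} [NormedAddCommGroup V] [InnerProductSpace ℝ V]

theorem hasTemperateGrowth_fourierChar : Function.HasTemperateGrowth (fun r : ℝ => (𝐞 r : ℂ)) := by
  have hderiv (n : ℕ) :
      iteratedDeriv n (fun r : ℝ => (𝐞 r : ℂ)) = fun r => (2 * π * Complex.I) ^ n * 𝐞 r := by
    induction n with
    | zero => simp
    | succ n ih =>
      ext r
      rw [iteratedDeriv_succ, ih, ((hasDerivAt_fourierChar r).const_mul _).deriv, pow_succ]
      ring
  refine ⟨?_, fun n => ⟨0, ‖(2 * π * Complex.I) ^ n‖, fun r => ?_⟩⟩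
  · simp only [fourierChar_apply]
    exact ((Complex.ofRealCLM.contDiff.comp (contDiff_const.mul contDiff_id)).mul
      contDiff_const).cexp
  · rw [norm_iteratedFDeriv_eq_norm_iteratedDeriv, hderiv, norm_mul, Circle.norm_coe, pow_zero]

theorem hasTemperateGrowth_chirp (s : ℝ) :
    Function.HasTemperateGrowth (fun ξ : V => (𝐞 (s * ‖ξ‖ ^ 2) : ℂ)) :=
  hasTemperateGrowth_fourierChar.comp
    ((Function.HasTemperateGrowth.const s).mul (Function.hasTemperateGrowth_norm_sq V))

theorem hasTemperateGrowth_fourierChar_neg_inner (η : V) :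
    Function.HasTemperateGrowth (fun y : V => (𝐞 (-⟪y, η⟫) : ℂ)) :=
  hasTemperateGrowth_fourierChar.comp (Function.hasTemperateGrowth_inner_left η).neg

end TemperatePhases

section ModulatedPropagator

open Filter

variable {V : Type*} [NormedAddCommGroup V] [InnerProductSpace ℝ V] [MeasurableSpace V]
  [BorelSpace V] [FiniteDimensional ℝ V] {t : ℝ}

theorem fourier_comp_sub_left (f : V → ℂ) (x η : V) :
    𝓕 (fun y => f (x - y)) η = 𝐞 (-⟪η, x⟫) • 𝓕⁻ f η := by
  rw [fourier_eq, ← integral_sub_left_eq_self _ volume x, fourierInv_eq, Circle.smul_def,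
    ← integral_smul]
  refine integral_congr_ae (Eventually.of_forall fun y => ?_)
  simp only [sub_sub_cancel, ← Circle.smul_def, smul_smul, ← AddChar.map_add_eq_mul,
    inner_sub_left, real_inner_comm x, neg_sub, neg_add_eq_sub]

theorem IsWeakFourierTransform.integral_smul_comp_sub {K k : V → ℝ}
    (h : IsWeakFourierTransform K k) {f : V → ℂ} (hf : Integrable f) {x : V}
    (hK : Integrable fun y => K y • f (x - y)) (hk : Integrable fun η => k η • 𝓕⁻ f η) :
    ∫ y, K y • f (x - y) = 𝓕 (fun η => k η • 𝓕⁻ f η) x := by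
  have hcomm (η : V) : k η • 𝐞 (-⟪η, x⟫) • 𝓕⁻ f η = 𝐞 (-⟪η, x⟫) • k η • 𝓕⁻ f η := smul_comm ..
  rw [h (hf.comp_sub_left x) hK, fourier_eq] <;> simp only [fourier_comp_sub_left, hcomm]
  exact (fourierIntegral_convergent_iff x).2 hk

theorem fourier_fourier_mul {q u : V → ℂ} (hq : Integrable q) (hu : Integrable u) (ξ : V) :
    𝓕 (fun x => 𝓕 q x * u x) ξ = ∫ η, q η * 𝓕 u (η + ξ) := by
  have h := VectorFourier.integral_fourierIntegral_smul_eq_flip (L := innerₗ V)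
    continuous_fourierChar (by simpa using! continuous_inner) hq
    ((fourierIntegral_convergent_iff ξ).2 hu)
  rw [flip_innerₗ] at h
  simp only [← fourier_fourierChar_smul, ← smul_eq_mul]
  rw [fourier_eq]
  simpa only [smul_comm (𝐞 _)] using! h

/-- The operator `M_t U(-t)`, with its phases `e^{i|x|²/(4t)}` and `e^{4π²it|ξ|²}` written through
the standard character `𝐞 r = e^{2πir}`. -/
noncomputable def modulatedPropagator (t : ℝ) (f : V → ℂ) (x : V) : ℂ :=
  𝐞 (‖x‖ ^ 2 / (8 * π * t)) • 𝓕⁻ (fun ξ => 𝐞 (2 * π * t * ‖ξ‖ ^ 2) • 𝓕 f ξ) x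

theorem modulatedPropagator_eq_integral (t : ℝ) (f : V → ℂ) (x : V) :
    modulatedPropagator t f x =
      ∫ ξ, 𝐞 (‖x‖ ^ 2 / (8 * π * t) + (⟪ξ, x⟫ + 2 * π * t * ‖ξ‖ ^ 2)) • 𝓕 f ξ := by
  rw [modulatedPropagator, fourierInv_eq, Circle.smul_def, ← integral_smul]
  simp only [← Circle.smul_def, smul_smul, ← AddChar.map_add_eq_mul]

theorem Mt_schrodingerProp_neg {d : ℕ} (t : ℝ) (f : EuclideanSpace ℝ (Fin d) → ℂ) :
    Mt d t (schrodingerProp d (-t) f) = modulatedPropagator t f := by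
  ext x
  rw [Mt, schrodingerProp, modulatedPropagator, fourierInv_eq, Circle.smul_def, smul_eq_mul,
    fourierChar_apply]
  congr 1
  · congr 1
    push_cast
    field_simp
    ring
  · refine integral_congr_ae (Eventually.of_forall fun ξ => ?_)
    simp only [Circle.smul_def, smul_eq_mul, fourierChar_apply, real_inner_comm]
    push_cast
    ring_nf

theorem modulatedPropagator_sub_smul (ht : t ≠ 0) (f : V → ℂ) (x η : V) :
    modulatedPropagator t f (x - (4 * π * t) • η) =
      modulatedPropagator t (fun y => 𝐞 (-⟪y, η⟫) • f y) x := by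
  have hphase (ξ : V) : ‖x - (4 * π * t) • η‖ ^ 2 / (8 * π * t) +
        (⟪ξ + η, x - (4 * π * t) • η⟫ + 2 * π * t * ‖ξ + η‖ ^ 2) =
      ‖x‖ ^ 2 / (8 * π * t) + (⟪ξ, x⟫ + 2 * π * t * ‖ξ‖ ^ 2) := by
    rw [norm_sub_sq_real, norm_add_sq_real, norm_smul, mul_pow, norm_eq_abs, sq_abs,
      inner_add_left, inner_sub_right, inner_sub_right, real_inner_smul_right,
      real_inner_smul_right, real_inner_smul_right, real_inner_self_eq_norm_sq,
      real_inner_comm η x]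
    field_simp
    ring
  rw [modulatedPropagator_eq_integral, modulatedPropagator_eq_integral,
    ← integral_add_right_eq_self _ η]
  simp only [fourier_fourierChar_smul, hphase]

theorem modulatedPropagator_fourier_mul (ht : t ≠ 0) {q u : V → ℂ} (hq : Integrable q)
    (hu : Integrable u) (hFu : Integrable (𝓕 u)) (x : V) :
    modulatedPropagator t (fun y => 𝓕 q y * u y) x =
      ∫ η, q η * modulatedPropagator t u (x - (4 * π * t) • η) := by
  have hprod : Integrable (Function.uncurry fun ξ η => q η * 𝓕 u (η + ξ))
      ((volume : Measure V).prod volume) := by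
    simpa only [Function.comp_def, Function.uncurry_def] using
      (measurePreserving_prod_add_swap volume volume).integrable_comp_of_integrable
        (hq.mul_prod hFu)
  let phase (ξ : V) : Circle := 𝐞 (‖x‖ ^ 2 / (8 * π * t) + (⟪ξ, x⟫ + 2 * π * t * ‖ξ‖ ^ 2))
  have hphase : Continuous fun z : V × V => (phase z.1 : ℂ) := by fun_prop
  have hphased : Integrable (Function.uncurry fun ξ η => phase ξ • (q η * 𝓕 u (η + ξ)))
      ((volume : Measure V).prod volume) :=
    hprod.bdd_smul (1 : ℝ) hphase.aestronglyMeasurable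
      (Eventually.of_forall fun _ => (Circle.norm_coe _).le)
  calc modulatedPropagator t (fun y => 𝓕 q y * u y) x
      = ∫ ξ, ∫ η, phase ξ • (q η * 𝓕 u (η + ξ)) := by
        simp only [modulatedPropagator_eq_integral, fourier_fourier_mul hq hu, Circle.smul_def,
          integral_smul, phase]
    _ = ∫ η, ∫ ξ, phase ξ • (q η * 𝓕 u (η + ξ)) := integral_integral_swap hphased
    _ = ∫ η, q η * modulatedPropagator t u (x - (4 * π * t) • η) := by
        simp only [modulatedPropagator_sub_smul ht, modulatedPropagator_eq_integral,
          fourier_fourierChar_smul, ← integral_const_mul, mul_smul_comm, add_comm, phase]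

theorem inner_circle_smul_smul (z : Circle) (w₁ w₂ : ℂ) :
    inner ℂ (z • w₁) (z • w₂) = inner ℂ w₁ w₂ := by
  rw [Circle.smul_def, Circle.smul_def, inner_smul_left, inner_smul_right, ← mul_assoc,
    ← Circle.coe_inv_eq_conj, ← Circle.coe_mul, inv_mul_cancel, Circle.coe_one, one_mul]

theorem integral_inner_modulatedPropagator (t : ℝ) (u v : SchwartzMap V ℂ) :
    ∫ x, inner ℂ (modulatedPropagator t u x) (modulatedPropagator t v x) =
      ∫ x, inner ℂ (u x) (v x) := by
  let chirped (w : SchwartzMap V ℂ) : SchwartzMap V ℂ :=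
    SchwartzMap.smulLeftCLM ℂ (fun ξ => (𝐞 (2 * π * t * ‖ξ‖ ^ 2) : ℂ)) (𝓕 w)
  have hchirped (w : SchwartzMap V ℂ) (ξ : V) : chirped w ξ = 𝐞 (2 * π * t * ‖ξ‖ ^ 2) • 𝓕 w ξ :=
    SchwartzMap.smulLeftCLM_apply_apply (hasTemperateGrowth_chirp _) _ _
  have hprop (w : SchwartzMap V ℂ) (x : V) :
      modulatedPropagator t w x = 𝐞 (‖x‖ ^ 2 / (8 * π * t)) • 𝓕⁻ (chirped w) x := by
    rw [modulatedPropagator, SchwartzMap.fourierInv_coe, funext (hchirped w)]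
    rfl
  simp only [hprop, inner_circle_smul_smul]
  calc ∫ x, inner ℂ (𝓕⁻ (chirped u) x) (𝓕⁻ (chirped v) x)
      = ∫ ξ, inner ℂ (chirped u ξ) (chirped v ξ) := by
        rw [← SchwartzMap.integral_inner_fourier_fourier, fourier_fourierInv_eq,
          fourier_fourierInv_eq]
    _ = ∫ ξ, inner ℂ (𝓕 u ξ) (𝓕 v ξ) := by simp only [hchirped, inner_circle_smul_smul]
    _ = ∫ x, inner ℂ (u x) (v x) := SchwartzMap.integral_inner_fourier_fourier u v

theorem integral_modulatedPropagator_mul_conj_sub (ht : t ≠ 0) (u v : SchwartzMap V ℂ) (η : V) :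
    ∫ y, modulatedPropagator t u y *
        (starRingEnd ℂ) (modulatedPropagator t v (y - (4 * π * t) • η)) =
      𝓕⁻ (fun y => u y * (starRingEnd ℂ) (v y)) η := by
  let w : SchwartzMap V ℂ := SchwartzMap.smulLeftCLM ℂ (fun y => (𝐞 (-⟪y, η⟫) : ℂ)) v
  have hw : ⇑w = fun y => 𝐞 (-⟪y, η⟫) • v y :=
    funext (SchwartzMap.smulLeftCLM_apply_apply (hasTemperateGrowth_fourierChar_neg_inner η) v)
  have h := integral_inner_modulatedPropagator t w u
  simp only [hw, ← modulatedPropagator_sub_smul ht, RCLike.inner_apply] at h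
  rw [h, fourierInv_eq]
  refine integral_congr_ae (Eventually.of_forall fun y => ?_)
  simp only [Circle.smul_def, smul_eq_mul, map_mul, ← Circle.coe_inv_eq_conj,
    AddChar.map_neg_eq_inv, inv_inv]
  ring

end ModulatedPropagator

section Factorization

open Module

variable {d : ℕ} {γ a t : ℝ}

theorem integrable_hartreeKernel_smul_fourierInv (hγ0 : 0 < γ) (hγd : γ < d) (ha : 0 ≤ a)
    (ht : t ≠ 0) {f : EuclideanSpace ℝ (Fin d) → ℂ} (hFf : Integrable (𝓕⁻ f)) :
    Integrable fun η => hartreeKernel d γ a t η • 𝓕⁻ f η :=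
  integrable_hartreeKernel_smul hγ0 hγd ha ht hFf fun η => by
    rw [fourierInv_eq_fourier_neg]
    exact norm_fourier_le_integral_norm f (-η)

theorem integral_exp_neg_mul_norm_mul_norm_rpow_smul_comp_sub (hγ0 : 0 < γ) (hγd : γ < d)
    (ha : 0 ≤ a) {f : EuclideanSpace ℝ (Fin d) → ℂ} (hf : Integrable f) (hFf : Integrable (𝓕⁻ f))
    {C : ℝ} (hC : ∀ x, ‖f x‖ ≤ C) (x : EuclideanSpace ℝ (Fin d)) :
    ∫ y, (exp (-(a * ‖y‖)) * ‖y‖ ^ (-γ)) • f (x - y) =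
      𝓕 (fun η => hartreeFourierConst d γ a • hartreeKernel d γ a (4 * π)⁻¹ η • 𝓕⁻ f η) x := by
  have hd : (γ : ℝ) < finrank ℝ (EuclideanSpace ℝ (Fin d)) := by rwa [finrank_euclideanSpace_fin]
  have : Nontrivial (EuclideanSpace ℝ (Fin d)) :=
    nontrivial_of_finrank_pos (R := ℝ) (by exact_mod_cast hγ0.trans hd)
  have hk := (integrable_hartreeKernel_smul_fourierInv hγ0 hγd ha
    (inv_ne_zero (by positivity : 4 * π ≠ 0)) hFf).smul (hartreeFourierConst d γ a)
  have hK := integrable_exp_neg_mul_norm_mul_norm_rpow_neg_smul ha hγ0.le hd (hf.comp_sub_left x)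
    fun y => hC (x - y)
  rw [(isWeakFourierTransform_hartreeKernel hγ0 hγd ha).integral_smul_comp_sub hf hK
    (by simpa only [mul_smul] using! hk)]
  simp only [mul_smul]

theorem exists_schwartzMap_eq_mul_conj {V : Type*} [NormedAddCommGroup V] [NormedSpace ℝ V]
    (u v : SchwartzMap V ℂ) :
    ∃ f : SchwartzMap V ℂ, ⇑f = fun y => u y * (starRingEnd ℂ) (v y) :=
  ⟨SchwartzMap.pairing (ContinuousLinearMap.mul ℝ ℂ) u
    (v.postcompCLM (Complex.conjCLE : ℂ →L[ℝ] ℂ)), rfl⟩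

theorem modulatedPropagator_hartreeOp (hγ0 : 0 < γ) (hγd : γ < d) (ha : 0 ≤ a) (ht : t ≠ 0)
    (u₁ u₂ : SchwartzMap (EuclideanSpace ℝ (Fin d)) ℂ) {u₃ : EuclideanSpace ℝ (Fin d) → ℂ}
    (hu₃ : Integrable u₃) (hFu₃ : Integrable (𝓕 u₃)) (x : EuclideanSpace ℝ (Fin d)) :
    modulatedPropagator t (hartreeOp d a γ u₁ u₂ u₃) x =
      hartreeFourierConst d γ a • ∫ η, (hartreeKernel d γ a (4 * π)⁻¹ η •
        𝓕⁻ (fun y => u₁ y * (starRingEnd ℂ) (u₂ y)) η) *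
          modulatedPropagator t u₃ (x - (4 * π * t) • η) := by
  obtain ⟨f, hf⟩ := exists_schwartzMap_eq_mul_conj u₁ u₂
  have hFf : Integrable (𝓕⁻ ⇑f) := SchwartzMap.fourierInv_coe f ▸ (𝓕⁻ f).integrable
  have hk := (integrable_hartreeKernel_smul_fourierInv hγ0 hγd ha
    (inv_ne_zero (by positivity : 4 * π ≠ 0)) hFf).smul (hartreeFourierConst d γ a)
  have hop : hartreeOp d a γ u₁ u₂ u₃ = fun y => 𝓕 (fun η => hartreeFourierConst d γ a •
      hartreeKernel d γ a (4 * π)⁻¹ η • 𝓕⁻ ⇑f η) y * u₃ y := by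
    ext y
    rw [hartreeOp, ← integral_exp_neg_mul_norm_mul_norm_rpow_smul_comp_sub hγ0 hγd ha f.integrable
      hFf (SchwartzMap.norm_le_seminorm ℝ f)]
    simp only [hf, Complex.real_smul]
  rw [hop, ← hf, ← integral_smul]
  refine (modulatedPropagator_fourier_mul ht hk hu₃ hFu₃ x).trans ?_
  simp only [Pi.smul_apply, smul_mul_assoc]

theorem convC_modulatedPropagator (ht : t ≠ 0)
    (u₁ u₂ : SchwartzMap (EuclideanSpace ℝ (Fin d)) ℂ) (η : EuclideanSpace ℝ (Fin d)) :
    convC (modulatedPropagator t u₁)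
        (fun y => (starRingEnd ℂ) (modulatedPropagator t u₂ (-y))) ((4 * π * t) • η) =
      𝓕⁻ (fun y => u₁ y * (starRingEnd ℂ) (u₂ y)) η := by
  rw [← integral_modulatedPropagator_mul_conj_sub ht, convC]
  simp only [neg_sub]

theorem hartreeTrilinear_modulatedPropagator (ht : t ≠ 0)
    (u₁ u₂ : SchwartzMap (EuclideanSpace ℝ (Fin d)) ℂ) (u₃ : EuclideanSpace ℝ (Fin d) → ℂ)
    (x : EuclideanSpace ℝ (Fin d)) :
    hartreeTrilinear d γ a t (modulatedPropagator t u₁) (fun y => modulatedPropagator t u₂ (-y))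
        (modulatedPropagator t u₃) x =
      |4 * π * t| ^ γ • ∫ η, (hartreeKernel d γ a (4 * π)⁻¹ η •
        𝓕⁻ (fun y => u₁ y * (starRingEnd ℂ) (u₂ y)) η) *
          modulatedPropagator t u₃ (x - (4 * π * t) • η) := by
  have hr : 4 * π * t ≠ 0 := by positivity
  have htime : 4 * π * t * (4 * π)⁻¹ = t := by field_simp
  have hkernel (η : EuclideanSpace ℝ (Fin d)) : hartreeKernel d γ a t ((4 * π * t) • η) =
      |4 * π * t| ^ (γ - d) * hartreeKernel d γ a (4 * π)⁻¹ η := by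
    rw [← hartreeKernel_mul_smul hr, htime]
  have hpow : |4 * π * t| ^ γ = |4 * π * t| ^ d * |4 * π * t| ^ (γ - d) := by
    rw [← rpow_natCast, ← rpow_add (abs_pos.2 hr), add_sub_cancel]
  have hscale := Measure.integral_comp_smul volume (fun y => hartreeKernel d γ a t y *
    convC (modulatedPropagator t u₁) (fun y => (starRingEnd ℂ) (modulatedPropagator t u₂ (-y))) y *
      modulatedPropagator t u₃ (x - y)) (4 * π * t)
  rw [finrank_euclideanSpace_fin, abs_inv, abs_pow,
    eq_inv_smul_iff₀ (pow_ne_zero _ (abs_ne_zero.2 hr))] at hscale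
  rw [hartreeTrilinear, convC, ← hscale, hpow, mul_smul]
  simp only [hkernel, convC_modulatedPropagator ht, ← Complex.real_smul]
  simp only [mul_smul, smul_mul_assoc, integral_smul]

theorem hartree_factorization_general (hγ0 : 0 < γ) (hγd : γ < d) (ha : 0 ≤ a) (ht : t ≠ 0)
    (u₁ u₂ : SchwartzMap (EuclideanSpace ℝ (Fin d)) ℂ) {u₃ : EuclideanSpace ℝ (Fin d) → ℂ}
    (hu₃ : Integrable u₃) (hFu₃ : Integrable (𝓕 u₃)) :
    Mt d t (schrodingerProp d (-t) (hartreeOp d a γ u₁ u₂ u₃)) =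
      fun x => (((4 * π) ^ (-γ) * hartreeFourierConst d γ a : ℝ) : ℂ) * ((|t| ^ (-γ) : ℝ) : ℂ) *
        hartreeTrilinear d γ a t (Mt d t (schrodingerProp d (-t) u₁))
          (fun y => Mt d t (schrodingerProp d (-t) u₂) (-y))
          (Mt d t (schrodingerProp d (-t) u₃)) x := by
  have hscale : (4 * π) ^ (-γ) * hartreeFourierConst d γ a * |t| ^ (-γ) * |4 * π * t| ^ γ =
      hartreeFourierConst d γ a := by
    have hπ : (0 : ℝ) < 4 * π := by positivity
    rw [abs_mul, abs_of_pos hπ, mul_rpow hπ.le (abs_nonneg t), rpow_neg hπ.le,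
      rpow_neg (abs_nonneg t)]
    field_simp
  ext x
  simp only [Mt_schrodingerProp_neg]
  rw [modulatedPropagator_hartreeOp hγ0 hγd ha ht u₁ u₂ hu₃ hFu₃,
    hartreeTrilinear_modulatedPropagator ht, ← Complex.ofReal_mul, ← Complex.real_smul, smul_smul,
    hscale]

end Factorization

/-- Factorization formula for the Schrödinger propagator applied to the Hartree
nonlinearity: `M_t U(-t) H_{a,γ}(u₁,u₂,u₃) = c |t|^{-γ} Ĥ_{a,γ,t}(M_t v₁, R M_t v₂, M_t v₃)`
with `v_j = U(-t)u_j`, for a nonzero constant `c` depending only on `d`, `γ`, the sign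
of `t`, and whether `a = 0` or `a > 0` (encoded by the booleans `sgn` and `az`). -/
theorem hartree_factorization (d : ℕ) (hd : 1 ≤ d) (γ : ℝ)
    (hγ0 : 0 < γ) (hγd : γ < d) (sgn az : Bool) :
    ∃ c : ℂ, c ≠ 0 ∧ ∀ a t : ℝ, 0 ≤ a → t ≠ 0 →
      ((az = true) ↔ a = 0) → ((sgn = true) ↔ 0 < t) →
      ∀ u₁ u₂ u₃ : SchwartzMap (EuclideanSpace ℝ (Fin d)) ℂ,
        Mt d t (schrodingerProp d (-t) (hartreeOp d a γ (⇑u₁) (⇑u₂) (⇑u₃))) =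
          fun x => c * ((|t| ^ (-γ) : ℝ) : ℂ) *
            hartreeTrilinear d γ a t
              (Mt d t (schrodingerProp d (-t) (⇑u₁)))
              (fun y => Mt d t (schrodingerProp d (-t) (⇑u₂)) (-y))
              (Mt d t (schrodingerProp d (-t) (⇑u₃))) x := by
  refine ⟨((4 * π) ^ (-γ) * hartreeFourierConst d γ (if az then 0 else 1) : ℝ), ?_,
    fun a t ha ht haz _ u₁ u₂ u₃ => ?_⟩
  · have hconst : 0 < hartreeFourierConst d γ (if az then 0 else 1) :=
      hartreeFourierConst_pos hγ0 hγd
    exact Complex.ofReal_ne_zero.2 (by positivity)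
  · rw [hartreeFourierConst_congr (b := a) (by simp [← haz])]
    exact hartree_factorization_general hγ0 hγd ha ht u₁ u₂ u₃.integrable
      (SchwartzMap.fourier_coe u₃ ▸ (𝓕 u₃).integrable)
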